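/- arXiv:2507.16677 — 6 statements merged into one kernel-verified Lean document; each statement's English description precedes it below -/
import Mathlib

section
/- Let X be a δ-hyperbolic graph and Y ⊆ X a nonempty K-quasiconvex subset, and set J = 2K+10δ+2. If x, y are vertices of X with d(x,y) ≤ 1, then d_Y^π(x,y) ≤ J. Consequently, for all vertices w, z of X one has d_Y^π(w,z) ≤ J·max{d(w,z), 1}. -/
/-!
Let `a`, `b` be nearest points of `Y` to `x`, `y`, where `d(x,y) ≤ 1`. A vertex `w` of a geodesic
from `x` to `a` has `a` as a nearest point of `Y` (`dist_le_of_mem_geodesic`). Consider a vertex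
`v` of a geodesic from `a` to `b`. Slimness of the triangles `a, b, x` and `x, b, y`, together with
the fact that the side from `x` to `y` consists of its endpoints only, puts `v` within `2δ` of the
side from `a` to `x` or of the side from `y` to `b`; quasiconvexity puts `v` within `K` of `Y`.
Hence `v` is within `K + 4δ` of `a` or of `b` (`near_endpoint`). Applied to the vertex at distance
`⌊K + 4δ⌋ + 1` from `a`, this gives `d(a,b) ≤ 2(K + 4δ) + 1`, which is at most `J`
(`dist_proj_le`). The general estimate follows by adding up along a geodesic from `w` to `z`,
choosing a projection of each intermediate vertex.
-/

open scoped ENNReal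

/-- `G` is `δ`-hyperbolic: every geodesic triangle is `δ`-slim, i.e. (the support of) each
geodesic side lies in the closed `δ`-neighborhood of the union of the other two sides. -/
def SlimTrianglesG {V : Type*} (G : SimpleGraph V) (δ : ℝ) : Prop :=
  ∀ ⦃x y z : V⦄ (p : G.Walk x y) (q : G.Walk x z) (r : G.Walk z y),
    p.length = G.dist x y → q.length = G.dist x z → r.length = G.dist z y →
    ∀ v ∈ p.support, ∃ w, (w ∈ q.support ∨ w ∈ r.support) ∧ (G.dist v w : ℝ) ≤ δ

/-- `Y` is `K`-quasiconvex in `G`: every geodesic with endpoints in `Y` is contained in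
the closed `K`-neighborhood of `Y`. -/
def QuasiconvexIn {V : Type*} (G : SimpleGraph V) (K : ℝ) (Y : Set V) : Prop :=
  ∀ ⦃x⦄, x ∈ Y → ∀ ⦃y⦄, y ∈ Y → ∀ w : G.Walk x y, w.length = G.dist x y →
    ∀ v ∈ w.support, ∃ u ∈ Y, (G.dist v u : ℝ) ≤ K

/-- The closed `r`-neighborhood of a set `A` of vertices. -/
def nbhd {V : Type*} (G : SimpleGraph V) (r : ℝ) (A : Set V) : Set V :=
  {v | ∃ a ∈ A, (G.dist v a : ℝ) ≤ r}

/-- The nearest-point projection of the vertex `z` to the set `Y`: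
`π_Y(z) = {y ∈ Y | dist(z,y) = dist(z,Y)}`. -/
def projSet {V : Type*} (G : SimpleGraph V) (Y : Set V) (z : V) : Set V :=
  {y ∈ Y | ∀ y' ∈ Y, G.dist z y ≤ G.dist z y'}

/-- The nearest-point projection of a set `A` to `Y`: `π_Y(A) = ⋃_{a ∈ A} π_Y(a)`. -/
def projSetOf {V : Type*} (G : SimpleGraph V) (Y A : Set V) : Set V :=
  ⋃ a ∈ A, projSet G Y a

/-- The diameter (in `ℝ≥0∞`) of a set of vertices of `G`. -/
noncomputable def gdiam {V : Type*} (G : SimpleGraph V) (S : Set V) : ℝ≥0∞ :=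
  ⨆ a ∈ S, ⨆ b ∈ S, (G.dist a b : ℝ≥0∞)

/-- `d_Y^π(A,B) = diam(π_Y(A) ∪ π_Y(B))`. -/
noncomputable def projDiam {V : Type*} (G : SimpleGraph V) (Y A B : Set V) : ℝ≥0∞ :=
  gdiam G (projSetOf G Y A ∪ projSetOf G Y B)

namespace ProjLipschitz

variable {V : Type*} {G : SimpleGraph V}

lemma dist_add_dist_of_geodesic (hconn : G.Connected) {x y w : V} (p : G.Walk x y)
    (hp : p.length = G.dist x y) (hw : w ∈ p.support) :
    G.dist x w + G.dist w y = G.dist x y := by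
  classical
  have h1 := SimpleGraph.dist_le (p.takeUntil w hw)
  have h2 := SimpleGraph.dist_le (p.dropUntil w hw)
  have h3 := congrArg SimpleGraph.Walk.length (p.take_spec hw)
  rw [SimpleGraph.Walk.length_append] at h3
  have h4 := hconn.dist_triangle (u := x) (v := w) (w := y)
  omega

/-- A nearest point `a` of `Y` to `x` is also a nearest point to every vertex between `x`
and `a`. -/
lemma dist_le_of_mem_geodesic (hconn : G.Connected) {Y : Set V} {x a w u : V}
    (ha : a ∈ projSet G Y x) (hw : G.dist x w + G.dist w a = G.dist x a) (hu : u ∈ Y) :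
    G.dist w a ≤ G.dist w u := by
  have h1 := ha.2 u hu
  have h2 := hconn.dist_triangle (u := x) (v := w) (w := u)
  omega

lemma eq_or_eq_of_length_le_one {x y w : V} (p : G.Walk x y) (hp : p.length ≤ 1)
    (hw : w ∈ p.support) : w = x ∨ w = y := by
  cases p with
  | nil => simp_all
  | cons h q =>
    cases q with
    | nil => simpa using hw
    | cons h' q' => simp at hp

/-- If `v` is within `2δ` of a vertex `w` between `x` and its nearest point `a`, and within `K` of
`Y`, then `v` is within `K + 4δ` of `a`. -/
lemma near_of_near_side (hconn : G.Connected) {δ K : ℝ} {Y : Set V} {x a v w u : V}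
    (ha : a ∈ projSet G Y x) (hw : G.dist x w + G.dist w a = G.dist x a) (hu : u ∈ Y)
    (hvu : (G.dist v u : ℝ) ≤ K) (hvw : (G.dist v w : ℝ) ≤ 2 * δ) :
    (G.dist v a : ℝ) ≤ K + 4 * δ := by
  have h1 : (G.dist w a : ℝ) ≤ G.dist w u := by
    exact_mod_cast dist_le_of_mem_geodesic hconn ha hw hu
  have h2 : (G.dist w u : ℝ) ≤ G.dist w v + G.dist v u := by
    exact_mod_cast hconn.dist_triangle
  have h3 : (G.dist v a : ℝ) ≤ G.dist v w + G.dist w a := by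
    exact_mod_cast hconn.dist_triangle
  rw [G.dist_comm (u := w) (v := v)] at h2
  linarith

lemma near_endpoint (hconn : G.Connected) {δ K : ℝ} (hδ : 0 ≤ δ)
    (hhyp : SlimTrianglesG G δ) {Y : Set V} (hY : QuasiconvexIn G K Y) {x y a b v : V}
    (hxy : G.dist x y ≤ 1) (ha : a ∈ projSet G Y x) (hb : b ∈ projSet G Y y)
    (p : G.Walk a b) (hp : p.length = G.dist a b) (hv : v ∈ p.support) :
    (G.dist v a : ℝ) ≤ K + 4 * δ ∨ (G.dist v b : ℝ) ≤ K + 4 * δ := by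
  obtain ⟨u, hu, hvu⟩ := hY ha.1 hb.1 p hp v hv
  obtain ⟨q, hq⟩ := hconn.exists_walk_length_eq_dist a x
  obtain ⟨r, hr⟩ := hconn.exists_walk_length_eq_dist x b
  obtain ⟨s, hs⟩ := hconn.exists_walk_length_eq_dist x y
  obtain ⟨t, ht⟩ := hconn.exists_walk_length_eq_dist y b
  obtain ⟨w, hw | hw, hvw⟩ := hhyp p q r hp hq hr v hv
  · left
    have h := dist_add_dist_of_geodesic hconn q hq hw
    refine near_of_near_side (w := w) hconn ha ?_ hu hvu (by linarith)
    rw [G.dist_comm (u := x) (v := w), G.dist_comm (u := w) (v := a),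
      G.dist_comm (u := x) (v := a)]
    omega
  · obtain ⟨w', hw', hww'⟩ := hhyp r s t hr hs ht w hw
    have hvw' : (G.dist v w' : ℝ) ≤ 2 * δ := by
      have h : (G.dist v w' : ℝ) ≤ G.dist v w + G.dist w w' := by
        exact_mod_cast hconn.dist_triangle
      linarith
    have hcases : w' = x ∨ w' ∈ t.support := by
      rcases hw' with hw' | hw'
      · rcases eq_or_eq_of_length_le_one s (by omega) hw' with rfl | rfl
        · exact Or.inl rfl
        · exact Or.inr t.start_mem_support
      · exact Or.inr hw'
    rcases hcases with rfl | hw'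
    · left
      exact near_of_near_side hconn ha (by simp) hu hvu hvw'
    · right
      exact near_of_near_side hconn hb (dist_add_dist_of_geodesic hconn t ht hw') hu hvu hvw'

lemma dist_proj_le (hconn : G.Connected) {δ K : ℝ} (hδ : 0 ≤ δ) (hK : 0 ≤ K)
    (hhyp : SlimTrianglesG G δ) {Y : Set V} (hY : QuasiconvexIn G K Y) {x y a b : V}
    (hxy : G.dist x y ≤ 1) (ha : a ∈ projSet G Y x) (hb : b ∈ projSet G Y y) :
    (G.dist a b : ℝ) ≤ 2 * K + 10 * δ + 2 := by
  obtain ⟨p, hp⟩ := hconn.exists_walk_length_eq_dist a b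
  set n := ⌊K + 4 * δ⌋₊ + 1 with hn
  have hn1 : K + 4 * δ < n := by
    rw [hn]; exact_mod_cast Nat.lt_floor_add_one (K + 4 * δ)
  have hn2 : (n : ℝ) ≤ K + 4 * δ + 1 := by
    have := Nat.floor_le (show 0 ≤ K + 4 * δ by positivity)
    rw [hn]; push_cast; linarith
  rcases le_total (G.dist a b) n with hle | hle
  · have : (G.dist a b : ℝ) ≤ n := by exact_mod_cast hle
    linarith
  · have h1 : G.dist a (p.getVert n) ≤ n := by
      have := SimpleGraph.dist_le (p.take n)
      rw [SimpleGraph.Walk.take_length] at this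
      omega
    have h2 : G.dist (p.getVert n) b + n ≤ G.dist a b := by
      have := SimpleGraph.dist_le (p.drop n)
      rw [SimpleGraph.Walk.drop_length] at this
      omega
    have h3 := hconn.dist_triangle (u := a) (v := p.getVert n) (w := b)
    have h1' : (G.dist a (p.getVert n) : ℝ) ≤ n := by exact_mod_cast h1
    have h2' : (G.dist (p.getVert n) b : ℝ) + n ≤ G.dist a b := by exact_mod_cast h2
    have h3' : (G.dist a b : ℝ) ≤ G.dist a (p.getVert n) + G.dist (p.getVert n) b := by
      exact_mod_cast h3
    rcases near_endpoint hconn hδ hhyp hY hxy ha hb p hp (p.getVert_mem_support n) with h | h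
    · rw [G.dist_comm] at h
      linarith
    · linarith

lemma projSet_nonempty {Y : Set V} (hYne : Y.Nonempty) (z : V) : (projSet G Y z).Nonempty := by
  obtain ⟨y, hy, hmin⟩ := exists_minimalFor_of_wellFoundedLT (· ∈ Y) (G.dist z) hYne
  refine ⟨y, hy, fun y' hy' => ?_⟩
  rcases le_total (G.dist z y) (G.dist z y') with h | h
  · exact h
  · exact hmin hy' h

lemma dist_proj_le_walk (hconn : G.Connected) {J : ℝ} {Y : Set V}
    (hYne : Y.Nonempty)
    (hstep : ∀ x y a b : V, G.dist x y ≤ 1 → a ∈ projSet G Y x → b ∈ projSet G Y y →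
      (G.dist a b : ℝ) ≤ J)
    {w z : V} (p : G.Walk w z) :
    ∀ a b : V, a ∈ projSet G Y w → b ∈ projSet G Y z →
      (G.dist a b : ℝ) ≤ J * max (p.length : ℝ) 1 := by
  induction p with
  | nil =>
    intro a b ha hb
    simpa using hstep _ _ a b (by simp) ha hb
  | @cons u v z h q ih =>
    intro a b ha hb
    have huv : G.dist u v ≤ 1 := by simpa using SimpleGraph.dist_le h.toWalk
    rcases Nat.eq_zero_or_pos q.length with h0 | hpos
    · obtain rfl := SimpleGraph.Walk.eq_of_length_eq_zero h0
      simpa [h0] using hstep _ _ a b huv ha hb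
    · obtain ⟨c, hc⟩ := projSet_nonempty (G := G) hYne v
      have h1 := hstep _ _ a c huv ha hc
      have h2 := ih c b hc hb
      have h3 : (G.dist a b : ℝ) ≤ G.dist a c + G.dist c b := by
        exact_mod_cast hconn.dist_triangle
      have hpos' : (1 : ℝ) ≤ q.length := by exact_mod_cast hpos
      rw [max_eq_left hpos'] at h2
      rw [SimpleGraph.Walk.length_cons, max_eq_left (by push_cast; linarith)]
      push_cast
      linarith

lemma gdiam_le {S : Set V} {C : ℝ} (h : ∀ a ∈ S, ∀ b ∈ S, (G.dist a b : ℝ) ≤ C) :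
    gdiam G S ≤ ENNReal.ofReal C := by
  refine iSup₂_le fun a ha => iSup₂_le fun b hb => ?_
  rw [← ENNReal.ofReal_natCast]
  exact ENNReal.ofReal_le_ofReal (h a ha b hb)

/-- The diameter of a union of two sets, bounded by pairs within each set and across. -/
lemma gdiam_union_le {S T : Set V} {C : ℝ} (hS : ∀ a ∈ S, ∀ b ∈ S, (G.dist a b : ℝ) ≤ C)
    (hT : ∀ a ∈ T, ∀ b ∈ T, (G.dist a b : ℝ) ≤ C)
    (hST : ∀ a ∈ S, ∀ b ∈ T, (G.dist a b : ℝ) ≤ C) :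
    gdiam G (S ∪ T) ≤ ENNReal.ofReal C := by
  refine gdiam_le ?_
  rintro a (ha | ha) b (hb | hb)
  · exact hS a ha b hb
  · exact hST a ha b hb
  · rw [G.dist_comm]; exact hST b hb a ha
  · exact hT a ha b hb

end ProjLipschitz

/-- Closest point projections to a `K`-quasiconvex subset of a `δ`-hyperbolic graph are
coarsely Lipschitz: with `J = 2K+10δ+2`, if `d(x,y) ≤ 1` then `d_Y^π(x,y) ≤ J`, and in
general `d_Y^π(w,z) ≤ J·max{d(w,z),1}`. -/
theorem projection_coarsely_lipschitz
    {V : Type*} (G : SimpleGraph V) (hconn : G.Connected)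
    (δ K : ℝ) (hδ : 0 ≤ δ) (hK : 0 ≤ K)
    (hhyp : SlimTrianglesG G δ)
    (Y : Set V) (hYne : Y.Nonempty) (hY : QuasiconvexIn G K Y) :
    (∀ x y : V, G.dist x y ≤ 1 →
      gdiam G (projSet G Y x ∪ projSet G Y y) ≤ ENNReal.ofReal (2 * K + 10 * δ + 2)) ∧
    ∀ w z : V,
      gdiam G (projSet G Y w ∪ projSet G Y z) ≤
        ENNReal.ofReal ((2 * K + 10 * δ + 2) * max (G.dist w z : ℝ) 1) := by
  have hJ : (0 : ℝ) ≤ 2 * K + 10 * δ + 2 := by positivity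
  have hstep : ∀ x y a b : V, G.dist x y ≤ 1 → a ∈ projSet G Y x → b ∈ projSet G Y y →
      (G.dist a b : ℝ) ≤ 2 * K + 10 * δ + 2 := fun x y a b hxy ha hb =>
    ProjLipschitz.dist_proj_le hconn hδ hK hhyp hY hxy ha hb
  have hself : ∀ x : V, ∀ a ∈ projSet G Y x, ∀ b ∈ projSet G Y x,
      (G.dist a b : ℝ) ≤ 2 * K + 10 * δ + 2 := fun x a ha b hb =>
    hstep x x a b (by simp) ha hb
  refine ⟨fun x y hxy => ?_, fun w z => ?_⟩
  · exact ProjLipschitz.gdiam_union_le (hself x) (hself y)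
      fun a ha b hb => hstep x y a b hxy ha hb
  · have hmul : 2 * K + 10 * δ + 2 ≤ (2 * K + 10 * δ + 2) * max (G.dist w z : ℝ) 1 :=
      le_mul_of_one_le_right hJ (le_max_right _ _)
    obtain ⟨p, hp⟩ := hconn.exists_walk_length_eq_dist w z
    refine ProjLipschitz.gdiam_union_le (fun a ha b hb => (hself w a ha b hb).trans hmul)
      (fun a ha b hb => (hself z a ha b hb).trans hmul) fun a ha b hb => ?_
    rw [← hp]
    exact ProjLipschitz.dist_proj_le_walk hconn hYne hstep p a b ha hb
end

section
/- Let X be a δ-hyperbolic graph and Y ⊆ X a nonempty K-quasiconvex subset. If x, y are vertices of X with d_Y^π(x,y) > 2K+10δ+2, then every geodesic in X from x to y intersects the closed (K+2δ)-neighborhood N_{K+2δ}(Y). -/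
/-!
Suppose `a ∈ π_Y(x)` and `b ∈ π_Y(y)` are far apart. Every vertex `v` of a geodesic `[a, b]` is
within `K` of `Y`, and cutting the quadrilateral `x, a, b, y` along `[a, y]` shows that `v` is within
`2δ` of `[x, a]` or of `[x, y]`, or within `δ` of `[y, b]`. Since `a` is a nearest point of `Y` to
every vertex of `[x, a]`, closeness to `[x, a]` forces `dist v a ≤ K + 4δ`
(`dist_le_of_near_projection_geodesic`); likewise closeness to `[y, b]` forces
`dist v b ≤ K + 2δ`. The midpoint of `[a, b]` satisfies neither bound, so it is within `2δ` of
`[x, y]`, which therefore meets the `(K + 2δ)`-neighborhood of `Y` (`exists_near_of_far_projections`).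

When the diameter of the union is realized by two projections of the same vertex, the same argument
applies to the degenerate quadrilateral whose side `[x, y]` is a constant geodesic.
-/

open scoped ENNReal

/-- A vertex on a geodesic splits the distance between the endpoints additively. -/
lemma dist_add_dist_of_mem_geodesic {V : Type*} {G : SimpleGraph V} (hconn : G.Connected)
    {x y u : V} (p : G.Walk x y) (hp : p.length = G.dist x y) (hu : u ∈ p.support) :
    G.dist x u + G.dist u y = G.dist x y := by
  classical
  have h := congrArg SimpleGraph.Walk.length (p.take_spec hu)
  rw [SimpleGraph.Walk.length_append] at h
  have h1 := SimpleGraph.dist_le (p.takeUntil u hu)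
  have h2 := SimpleGraph.dist_le (p.dropUntil u hu)
  have h3 := hconn.dist_triangle (u := x) (v := u) (w := y)
  omega

/-- If `u` lies on a geodesic from `x` to a projection `a ∈ π_Y(x)`, then `a` is also a nearest
point of `Y` to `u`; hence a vertex `v` close to both `u` and `Y` is close to `a`. -/
lemma dist_le_of_near_projection_geodesic {V : Type*} {G : SimpleGraph V} (hconn : G.Connected)
    {Y : Set V} {K s : ℝ} {x a u v c : V} (ha : a ∈ projSet G Y x)
    (hu : G.dist x u + G.dist u a = G.dist x a) (hvu : (G.dist v u : ℝ) ≤ s)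
    (hc : c ∈ Y) (hvc : (G.dist v c : ℝ) ≤ K) :
    (G.dist v a : ℝ) ≤ K + 2 * s := by
  have h1 := ha.2 c hc
  have h2 := hconn.dist_triangle (u := x) (v := u) (w := c)
  have h3 := hconn.dist_triangle (u := u) (v := v) (w := c)
  have h4 := hconn.dist_triangle (u := v) (v := u) (w := a)
  have h5 := G.dist_comm (u := u) (v := v)
  have h6 : G.dist v a ≤ 2 * G.dist v u + G.dist v c := by omega
  have h7 : (G.dist v a : ℝ) ≤ 2 * G.dist v u + G.dist v c := by exact_mod_cast h6
  linarith

/-- The case of the theorem in which the large diameter is realized by a projection of `x` and a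
projection of `y`. The vertices `x` and `y` may coincide. -/
lemma exists_near_of_far_projections {V : Type*} {G : SimpleGraph V} (hconn : G.Connected)
    {δ K : ℝ} (hδ : 0 ≤ δ) (hhyp : SlimTrianglesG G δ) {Y : Set V} (hY : QuasiconvexIn G K Y)
    {x y a b : V} (ha : a ∈ projSet G Y x) (hb : b ∈ projSet G Y y)
    (hab : 2 * K + 10 * δ + 2 < (G.dist a b : ℝ)) (w : G.Walk x y) (hw : w.length = G.dist x y) :
    ∃ v ∈ w.support, v ∈ nbhd G (K + 2 * δ) Y := by
  obtain ⟨p, hp⟩ := hconn.exists_walk_length_eq_dist a b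
  obtain ⟨q, hq⟩ := hconn.exists_walk_length_eq_dist a y
  obtain ⟨r, hr⟩ := hconn.exists_walk_length_eq_dist y b
  obtain ⟨t, ht⟩ := hconn.exists_walk_length_eq_dist a x
  -- `v` is the midpoint of `p`, up to the rounding of `dist a b / 2`.
  obtain ⟨v, hv, hva, hvb⟩ : ∃ v ∈ p.support,
      G.dist a b ≤ 2 * G.dist v a + 1 ∧ G.dist a b ≤ 2 * G.dist v b + 1 := by
    refine ⟨p.getVert (p.length / 2), p.getVert_mem_support _, ?_⟩
    have h1 := dist_add_dist_of_mem_geodesic hconn p hp (p.getVert_mem_support (p.length / 2))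
    have h2 := SimpleGraph.dist_le (p.take (p.length / 2))
    have h3 := SimpleGraph.dist_le (p.drop (p.length / 2))
    rw [SimpleGraph.Walk.take_length] at h2
    rw [SimpleGraph.Walk.drop_length] at h3
    rw [G.dist_comm (v := a)]
    omega
  have hva' : (G.dist a b : ℝ) ≤ 2 * G.dist v a + 1 := by exact_mod_cast hva
  have hvb' : (G.dist a b : ℝ) ≤ 2 * G.dist v b + 1 := by exact_mod_cast hvb
  obtain ⟨c, hc, hvc⟩ := hY ha.1 hb.1 p hp v hv
  obtain ⟨u, hu | hu, hvu⟩ := hhyp p q r hp hq hr v hv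
  · obtain ⟨u', hu' | hu', huu'⟩ := hhyp q t w hq ht hw u hu
    all_goals
      have h1 : (G.dist v u' : ℝ) ≤ G.dist v u + G.dist u u' := by
        exact_mod_cast hconn.dist_triangle (u := v) (v := u) (w := u')
    · have h2 := dist_add_dist_of_mem_geodesic hconn t ht hu'
      have h3 : G.dist x u' + G.dist u' a = G.dist x a := by
        rw [G.dist_comm (u := x), G.dist_comm (v := a), G.dist_comm (u := x)]
        omega
      have h4 := dist_le_of_near_projection_geodesic hconn ha h3
        (show (G.dist v u' : ℝ) ≤ 2 * δ by linarith) hc hvc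
      linarith
    · refine ⟨u', hu', c, hc, ?_⟩
      have h2 : (G.dist u' c : ℝ) ≤ G.dist u' v + G.dist v c := by
        exact_mod_cast hconn.dist_triangle (u := u') (v := v) (w := c)
      rw [G.dist_comm (u := u') (v := v)] at h2
      linarith
  · have h := dist_le_of_near_projection_geodesic hconn hb
      (dist_add_dist_of_mem_geodesic hconn r hr hu) hvu hc hvc
    linarith

/-- If the projection distance of `x, y` to a nonempty `K`-quasiconvex subset `Y` of a
`δ`-hyperbolic graph exceeds `2K+10δ+2`, then every geodesic from `x` to `y` meets the
closed `(K+2δ)`-neighborhood of `Y`. -/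
theorem geodesic_meets_neighborhood_of_large_projection
    {V : Type*} (G : SimpleGraph V) (hconn : G.Connected)
    (δ K : ℝ) (hδ : 0 ≤ δ) (hK : 0 ≤ K)
    (hhyp : SlimTrianglesG G δ)
    (Y : Set V) (hYne : Y.Nonempty) (hY : QuasiconvexIn G K Y)
    (x y : V)
    (hbig : ENNReal.ofReal (2 * K + 10 * δ + 2) <
      gdiam G (projSet G Y x ∪ projSet G Y y)) :
    ∀ w : G.Walk x y, w.length = G.dist x y →
      ∃ v ∈ w.support, v ∈ nbhd G (K + 2 * δ) Y := by
  intro w hw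
  simp only [gdiam, lt_iSup_iff] at hbig
  obtain ⟨a, ha, b, hb, hab⟩ := hbig
  have hab' : 2 * K + 10 * δ + 2 < (G.dist a b : ℝ) := by
    rw [← ENNReal.ofReal_natCast] at hab
    exact (ENNReal.ofReal_lt_ofReal_iff_of_nonneg (by positivity)).1 hab
  rcases ha with ha | ha <;> rcases hb with hb | hb
  · obtain ⟨v, hv, h⟩ := exists_near_of_far_projections hconn hδ hhyp hY ha hb hab'
      SimpleGraph.Walk.nil (by simp)
    obtain rfl : v = x := by simpa using hv
    exact ⟨v, w.start_mem_support, h⟩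
  · exact exists_near_of_far_projections hconn hδ hhyp hY ha hb hab' w hw
  · rw [G.dist_comm] at hab'
    exact exists_near_of_far_projections hconn hδ hhyp hY hb ha hab' w hw
  · obtain ⟨v, hv, h⟩ := exists_near_of_far_projections hconn hδ hhyp hY ha hb hab'
      SimpleGraph.Walk.nil (by simp)
    obtain rfl : v = y := by simpa using hv
    exact ⟨v, w.end_mem_support, h⟩
end

section
/- Let X be a δ-hyperbolic graph and let Y, Y' ⊆ X be K-quasiconvex subsets such that diam(N_{2K+2δ}(Y') ∩ Y) ≤ M0. Then for every t ≥ 0, diam(N_t(Y') ∩ Y) ≤ M0 + 2K + 2t + 4δ + 2. -/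
/-!
Let `a, b ∈ Y` lie within `t` of `a', b' ∈ Y'`. Cutting the geodesic quadrilateral `a, b, b', a'`
into two triangles, each vertex of `[a, b]` is `2δ`-close to one of the other three sides. A vertex
further than `t + 2δ` from both `a` and `b` cannot be `2δ`-close to the short sides `[a, a']` and
`[b', b]`, so it is `2δ`-close to `[a', b']`; quasiconvexity of `Y` and `Y'` then puts it within `K`
of a point of `N_{2K+2δ}(Y') ∩ Y` (`exists_near_of_far_from_endpoints`).

Applying this to the vertices of `[a, b]` at distance `n = ⌊t + 2δ⌋ + 1` from `a` and from `b`, these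
two vertices are at distance at most `M0 + 2K`, so `dist a b ≤ M0 + 2K + 2n`. If `[a, b]` is too short
to contain them in this order, then already `dist a b < 2n`.
-/

open scoped ENNReal

lemma dist_le_length_of_mem_support {V : Type*} {G : SimpleGraph V} {x y v : V}
    (p : G.Walk x y) (hv : v ∈ p.support) : G.dist x v ≤ p.length ∧ G.dist v y ≤ p.length := by
  classical
  exact ⟨(SimpleGraph.dist_le (p.takeUntil v hv)).trans (p.length_takeUntil_le_length hv),
    (SimpleGraph.dist_le (p.dropUntil v hv)).trans (p.length_dropUntil_le_length hv)⟩

/-- A vertex of a geodesic `[a, b]` between points of `Y ∩ N_t(Y')` which is further than `t + 2δ`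
from both endpoints is `K`-close to `N_{2K+2δ}(Y') ∩ Y`. -/
lemma exists_near_of_far_from_endpoints {V : Type*} {G : SimpleGraph V} (hconn : G.Connected)
    {δ K t : ℝ} (hhyp : SlimTrianglesG G δ)
    {Y Y' : Set V} (hY : QuasiconvexIn G K Y) (hY' : QuasiconvexIn G K Y')
    {a b v : V} (ha : a ∈ nbhd G t Y' ∩ Y) (hb : b ∈ nbhd G t Y' ∩ Y)
    (p : G.Walk a b) (hp : p.length = G.dist a b) (hv : v ∈ p.support)
    (hav : t + 2 * δ < G.dist a v) (hvb : t + 2 * δ < G.dist v b) :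
    ∃ y ∈ nbhd G (2 * K + 2 * δ) Y' ∩ Y, (G.dist v y : ℝ) ≤ K := by
  obtain ⟨⟨a', ha', haa'⟩, haY⟩ := ha
  obtain ⟨⟨b', hb', hbb'⟩, hbY⟩ := hb
  have tri : ∀ x y z : V, (G.dist x z : ℝ) ≤ G.dist x y + G.dist y z := fun x y z => by
    exact_mod_cast hconn.dist_triangle
  have hδ : 0 ≤ δ := by
    obtain ⟨w, -, hw⟩ := hhyp p p SimpleGraph.Walk.nil hp hp (by simp) v hv
    exact le_trans (Nat.cast_nonneg _) hw
  obtain ⟨q, hq⟩ := hconn.exists_walk_length_eq_dist a b'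
  obtain ⟨r, hr⟩ := hconn.exists_walk_length_eq_dist b' b
  obtain ⟨s, hs⟩ := hconn.exists_walk_length_eq_dist a a'
  obtain ⟨u, hu⟩ := hconn.exists_walk_length_eq_dist a' b'
  obtain ⟨y, hyY, hvy⟩ := hY haY hbY p hp v hv
  obtain ⟨w, hw | hw, hvw⟩ := hhyp p q r hp hq hr v hv
  · obtain ⟨x, hx | hx, hwx⟩ := hhyp q s u hq hs hu w hw
    · exfalso
      have h1 : (G.dist a x : ℝ) ≤ G.dist a a' := by
        exact_mod_cast hs ▸ (dist_le_length_of_mem_support s hx).1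
      have h2 := tri a x v
      have h3 := tri v w x
      rw [G.dist_comm (u := x)] at h2
      linarith
    · obtain ⟨y', hy', hxy'⟩ := hY' ha' hb' u hu x hx
      refine ⟨y, ⟨⟨y', hy', ?_⟩, hyY⟩, hvy⟩
      have h1 := tri y v y'
      have h2 := tri v w y'
      have h3 := tri w x y'
      rw [G.dist_comm (u := y) (v := v)] at h1
      linarith
  · exfalso
    have h1 : (G.dist w b : ℝ) ≤ G.dist b b' := by
      rw [G.dist_comm (u := b)]
      exact_mod_cast hr ▸ (dist_le_length_of_mem_support r hw).2
    have h2 := tri v w b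
    linarith

/-- If `Y, Y'` are `K`-quasiconvex subsets of a `δ`-hyperbolic graph with
`diam(N_{2K+2δ}(Y') ∩ Y) ≤ M0`, then for every `t ≥ 0` one has
`diam(N_t(Y') ∩ Y) ≤ M0 + 2K + 2t + 4δ + 2`. -/
theorem geometric_separation_at_all_scales
    {V : Type*} (G : SimpleGraph V) (hconn : G.Connected)
    (δ K M0 : ℝ) (hδ : 0 ≤ δ) (hK : 0 ≤ K) (hM0 : 0 ≤ M0)
    (hhyp : SlimTrianglesG G δ)
    (Y Y' : Set V) (hY : QuasiconvexIn G K Y) (hY' : QuasiconvexIn G K Y')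
    (hsep : gdiam G (nbhd G (2 * K + 2 * δ) Y' ∩ Y) ≤ ENNReal.ofReal M0) :
    ∀ t : ℝ, 0 ≤ t →
      gdiam G (nbhd G t Y' ∩ Y) ≤
        ENNReal.ofReal (M0 + 2 * K + 2 * t + 4 * δ + 2) := by
  intro t ht
  have tri : ∀ x y z : V, (G.dist x z : ℝ) ≤ G.dist x y + G.dist y z := fun x y z => by
    exact_mod_cast hconn.dist_triangle
  refine iSup₂_le fun a ha => iSup₂_le fun b hb => ?_
  rw [← ENNReal.ofReal_natCast]
  apply ENNReal.ofReal_le_ofReal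
  -- `n` is the least integer exceeding `t + 2δ`; rounding up costs the final `+ 2`.
  set n : ℕ := ⌊t + 2 * δ⌋₊ + 1 with hn
  have hn1 : t + 2 * δ < n := by
    rw [hn]; push_cast; exact Nat.lt_floor_add_one _
  have hn2 : (n : ℝ) ≤ t + 2 * δ + 1 := by
    rw [hn]; push_cast
    linarith [Nat.floor_le (show 0 ≤ t + 2 * δ by linarith)]
  rcases lt_or_ge (G.dist a b) (2 * n) with hlt | hge
  · have : (G.dist a b : ℝ) < 2 * n := by exact_mod_cast hlt
    linarith
  obtain ⟨p, hp⟩ := hconn.exists_walk_length_eq_dist a b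
  have hfst : ∀ i, G.dist a (p.getVert i) ≤ i := fun i =>
    (SimpleGraph.dist_le (p.take i)).trans (by simp [SimpleGraph.Walk.take_length])
  have hsnd : ∀ i, G.dist (p.getVert i) b ≤ p.length - i := fun i =>
    (SimpleGraph.dist_le (p.drop i)).trans (by simp [SimpleGraph.Walk.drop_length])
  have near : ∀ i, n ≤ i → i + n ≤ G.dist a b →
      ∃ y ∈ nbhd G (2 * K + 2 * δ) Y' ∩ Y, (G.dist (p.getVert i) y : ℝ) ≤ K := by
    intro i h1 h2
    have h3 := hfst i
    have h4 := hsnd i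
    have h5 : G.dist a b ≤ G.dist a (p.getVert i) + G.dist (p.getVert i) b :=
      hconn.dist_triangle
    refine exists_near_of_far_from_endpoints hconn hhyp hY hY' ha hb p hp
      (p.getVert_mem_support i) (hn1.trans_le ?_) (hn1.trans_le ?_)
    · exact_mod_cast (show n ≤ G.dist a (p.getVert i) by omega)
    · exact_mod_cast (show n ≤ G.dist (p.getVert i) b by omega)
  obtain ⟨y, hy, hvy⟩ := near n le_rfl (by omega)
  obtain ⟨z, hz, hwz⟩ := near (G.dist a b - n) (by omega) (by omega)
  have hyz : (G.dist y z : ℝ) ≤ M0 := by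
    have h : (G.dist y z : ℝ≥0∞) ≤ ENNReal.ofReal M0 :=
      le_trans (le_iSup₂_of_le (f := fun a _ => ⨆ b ∈ _, (G.dist a b : ℝ≥0∞)) y hy
        (le_iSup₂ (f := fun b _ => (G.dist y b : ℝ≥0∞)) z hz)) hsep
    rw [← ENNReal.ofReal_natCast] at h
    exact (ENNReal.ofReal_le_ofReal_iff hM0).1 h
  have hav : (G.dist a (p.getVert n) : ℝ) ≤ n := by exact_mod_cast hfst n
  have hwb : (G.dist (p.getVert (G.dist a b - n)) b : ℝ) ≤ n := by
    have := hsnd (G.dist a b - n)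
    exact_mod_cast (show G.dist (p.getVert (G.dist a b - n)) b ≤ n by omega)
  have h1 := tri a (p.getVert n) b
  have h2 := tri (p.getVert n) y b
  have h3 := tri y z b
  have h4 := tri z (p.getVert (G.dist a b - n)) b
  rw [G.dist_comm (u := z) (v := p.getVert _)] at h4
  linarith
end

section
/- Let X be a δ-hyperbolic graph and let Y, Y' ⊆ X be distinct K-quasiconvex subsets with diam(N_{2K+2δ}(Y') ∩ Y) ≤ M0. Then diam(N_{K+2δ}(Y) ∩ N_{K+2δ}(Y')) ≤ M0 + 8K + 16δ + 2. -/
/-!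
Given `a, b` in both neighbourhoods and `R = K + 2δ`, choose `y₁, y₂ ∈ Y` and `z₁, z₂ ∈ Y'` at
distance at most `R` from `a, b`. The geodesic quadrilateral `y₁ y₂ z₂ z₁` is `2δ`-slim
(`quadrilateral_slim`) and its sides `[y₁, z₁]`, `[y₂, z₂]` have length at most `2R`, so a vertex
of `[y₁, y₂]` at distance more than `2R + 2δ` from both endpoints is `2δ`-close to `[z₁, z₂]`.
By quasiconvexity of `Y` and `Y'` such a vertex is `K`-close to a point of
`N_{2K+2δ}(Y') ∩ Y` (`exists_near_of_far`).

Take the two vertices of `[y₁, y₂]` at distance `t = ⌊2R + 2δ⌋ + 1` from the two ends. They are at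
least `d(y₁, y₂) - 2t` apart, and at most `M0 + 2K` apart, so
`d(a, b) ≤ 2R + 2t + M0 + 2K ≤ M0 + 8K + 16δ + 2`. If `d(y₁, y₂) < 2t` the bound is immediate.
-/

open scoped ENNReal

lemma exists_mem_support_dist_eq {V : Type*} {G : SimpleGraph V} {x y : V}
    (p : G.Walk x y) (hp : p.length = G.dist x y) (hconn : G.Connected)
    {t : ℕ} (ht : t ≤ p.length) :
    ∃ v ∈ p.support, G.dist x v = t ∧ G.dist v y = p.length - t := by
  refine ⟨p.getVert t, p.getVert_mem_support t, ?_⟩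
  have h1 := SimpleGraph.dist_le (p.take t)
  have h2 := SimpleGraph.dist_le (p.drop t)
  have h3 := hconn.dist_triangle (u := x) (v := p.getVert t) (w := y)
  rw [SimpleGraph.Walk.take_length] at h1
  rw [SimpleGraph.Walk.drop_length] at h2
  omega

lemma dist_left_le_of_mem_support {V : Type*} {G : SimpleGraph V} {x y v : V}
    (p : G.Walk x y) (hv : v ∈ p.support) : G.dist x v ≤ p.length := by
  classical
  exact (SimpleGraph.dist_le (p.takeUntil v hv)).trans (p.length_takeUntil_le_length hv)

lemma dist_right_le_of_mem_support {V : Type*} {G : SimpleGraph V} {x y v : V}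
    (p : G.Walk x y) (hv : v ∈ p.support) : G.dist v y ≤ p.length := by
  classical
  exact (SimpleGraph.dist_le (p.dropUntil v hv)).trans (p.length_dropUntil_le_length hv)

/-- Cutting a geodesic quadrilateral along a diagonal, each side is `2δ`-close to the union of
the other three. -/
lemma quadrilateral_slim {V : Type*} {G : SimpleGraph V} (hconn : G.Connected) {δ : ℝ}
    (hδ : 0 ≤ δ) (hhyp : SlimTrianglesG G δ) {y₁ y₂ z₁ z₂ : V}
    (p : G.Walk y₁ y₂) (q : G.Walk y₁ z₁) (m : G.Walk z₁ z₂) (r : G.Walk z₂ y₂)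
    (hp : p.length = G.dist y₁ y₂) (hq : q.length = G.dist y₁ z₁)
    (hm : m.length = G.dist z₁ z₂) (hr : r.length = G.dist z₂ y₂)
    {v : V} (hv : v ∈ p.support) :
    ∃ w, (w ∈ q.support ∨ w ∈ m.support ∨ w ∈ r.support) ∧ (G.dist v w : ℝ) ≤ 2 * δ := by
  obtain ⟨d, hd⟩ := hconn.exists_walk_length_eq_dist z₁ y₂
  obtain ⟨u, hu | hu, hvu⟩ := hhyp p q d hp hq hd v hv
  · exact ⟨u, Or.inl hu, by linarith⟩
  · obtain ⟨w, hw, huw⟩ := hhyp d m r hd hm hr u hu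
    refine ⟨w, Or.inr hw, ?_⟩
    have h : (G.dist v w : ℝ) ≤ G.dist v u + G.dist u w := mod_cast hconn.dist_triangle
    linarith

/-- A vertex of a geodesic between points of `Y` that is too far from its endpoints to be close to
the short sides of the quadrilateral is `K`-close to `N_{2K+2δ}(Y') ∩ Y`. -/
lemma exists_near_of_far {V : Type*} {G : SimpleGraph V} (hconn : G.Connected) {δ K S : ℝ}
    (hδ : 0 ≤ δ) (hhyp : SlimTrianglesG G δ) {Y Y' : Set V}
    (hY : QuasiconvexIn G K Y) (hY' : QuasiconvexIn G K Y')
    {y₁ y₂ z₁ z₂ : V} (hy₁ : y₁ ∈ Y) (hy₂ : y₂ ∈ Y) (hz₁ : z₁ ∈ Y') (hz₂ : z₂ ∈ Y')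
    (h₁ : (G.dist y₁ z₁ : ℝ) ≤ S) (h₂ : (G.dist z₂ y₂ : ℝ) ≤ S)
    (p : G.Walk y₁ y₂) (hp : p.length = G.dist y₁ y₂) {v : V} (hv : v ∈ p.support)
    (hv₁ : S + 2 * δ < G.dist y₁ v) (hv₂ : S + 2 * δ < G.dist v y₂) :
    ∃ u ∈ nbhd G (2 * K + 2 * δ) Y' ∩ Y, (G.dist v u : ℝ) ≤ K := by
  obtain ⟨q, hq⟩ := hconn.exists_walk_length_eq_dist y₁ z₁
  obtain ⟨m, hm⟩ := hconn.exists_walk_length_eq_dist z₁ z₂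
  obtain ⟨r, hr⟩ := hconn.exists_walk_length_eq_dist z₂ y₂
  obtain ⟨w, hw, hvw⟩ := quadrilateral_slim hconn hδ hhyp p q m r hp hq hm hr hv
  rcases hw with hw | hw | hw
  · exfalso
    have h3 : (G.dist y₁ w : ℝ) ≤ G.dist y₁ z₁ :=
      mod_cast hq ▸ dist_left_le_of_mem_support q hw
    have h4 : (G.dist y₁ v : ℝ) ≤ G.dist y₁ w + G.dist w v := mod_cast hconn.dist_triangle
    rw [G.dist_comm (u := w)] at h4
    linarith
  · obtain ⟨u, hu, hvu⟩ := hY hy₁ hy₂ p hp v hv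
    obtain ⟨u', hu', hwu'⟩ := hY' hz₁ hz₂ m hm w hw
    refine ⟨u, ⟨⟨u', hu', ?_⟩, hu⟩, hvu⟩
    have h3 : (G.dist u u' : ℝ) ≤ G.dist u v + G.dist v u' := mod_cast hconn.dist_triangle
    have h4 : (G.dist v u' : ℝ) ≤ G.dist v w + G.dist w u' := mod_cast hconn.dist_triangle
    rw [G.dist_comm (u := u) (v := v)] at h3
    linarith
  · exfalso
    have h3 : (G.dist w y₂ : ℝ) ≤ G.dist z₂ y₂ :=
      mod_cast hr ▸ dist_right_le_of_mem_support r hw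
    have h4 : (G.dist v y₂ : ℝ) ≤ G.dist v w + G.dist w y₂ := mod_cast hconn.dist_triangle
    linarith

lemma gdiam_le_ofReal_iff {V : Type*} {G : SimpleGraph V} {S : Set V} {M : ℝ} (hM : 0 ≤ M) :
    gdiam G S ≤ ENNReal.ofReal M ↔ ∀ a ∈ S, ∀ b ∈ S, (G.dist a b : ℝ) ≤ M := by
  simp only [gdiam, iSup_le_iff]
  refine forall₄_congr fun a _ b _ => ?_
  rw [← ENNReal.ofReal_natCast, ENNReal.ofReal_le_ofReal_iff hM]

/-- If `Y, Y'` are distinct `K`-quasiconvex subsets of a `δ`-hyperbolic graph with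
`diam(N_{2K+2δ}(Y') ∩ Y) ≤ M0`, then
`diam(N_{K+2δ}(Y) ∩ N_{K+2δ}(Y')) ≤ M0 + 8K + 16δ + 2`. -/
theorem separated_neighborhoods
    {V : Type*} (G : SimpleGraph V) (hconn : G.Connected)
    (δ K M0 : ℝ) (hδ : 0 ≤ δ) (hK : 0 ≤ K) (hM0 : 0 ≤ M0)
    (hhyp : SlimTrianglesG G δ)
    (Y Y' : Set V) (hne : Y ≠ Y')
    (hY : QuasiconvexIn G K Y) (hY' : QuasiconvexIn G K Y')
    (hsep : gdiam G (nbhd G (2 * K + 2 * δ) Y' ∩ Y) ≤ ENNReal.ofReal M0) :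
    gdiam G (nbhd G (K + 2 * δ) Y ∩ nbhd G (K + 2 * δ) Y') ≤
      ENNReal.ofReal (M0 + 8 * K + 16 * δ + 2) := by
  rw [gdiam_le_ofReal_iff hM0] at hsep
  rw [gdiam_le_ofReal_iff (by positivity)]
  rintro a ⟨⟨y₁, hy₁, hay₁⟩, z₁, hz₁, haz₁⟩ b ⟨⟨y₂, hy₂, hby₂⟩, z₂, hz₂, hbz₂⟩
  have tri (u v w : V) : (G.dist u w : ℝ) ≤ G.dist u v + G.dist v w :=
    mod_cast hconn.dist_triangle
  have h₁ := tri y₁ a z₁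
  have h₂ := tri z₂ b y₂
  have hab₁ := tri a y₁ b
  have hab₂ := tri y₁ y₂ b
  rw [G.dist_comm (u := y₁) (v := a)] at h₁
  rw [G.dist_comm (u := z₂) (v := b)] at h₂
  rw [G.dist_comm (u := y₂) (v := b)] at hab₂
  set S : ℝ := 2 * (K + 2 * δ) with hS
  set t : ℕ := ⌊S + 2 * δ⌋₊ + 1 with ht
  have ht₁ : S + 2 * δ < t := by
    rw [ht]; push_cast; exact Nat.lt_floor_add_one _
  have ht₂ : (t : ℝ) ≤ S + 2 * δ + 1 := by
    rw [ht]; push_cast; linarith [Nat.floor_le (show 0 ≤ S + 2 * δ by positivity)]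
  obtain ⟨p, hp⟩ := hconn.exists_walk_length_eq_dist y₁ y₂
  rcases lt_or_ge (G.dist y₁ y₂) (2 * t) with hlt | hge
  · have h : (G.dist y₁ y₂ : ℝ) ≤ 2 * t := mod_cast hlt.le
    linarith
  · obtain ⟨v₁, hv₁, hv₁l, hv₁r⟩ :=
      exists_mem_support_dist_eq p hp hconn (show t ≤ p.length by omega)
    obtain ⟨v₂, hv₂, hv₂l, hv₂r⟩ :=
      exists_mem_support_dist_eq p hp hconn (show p.length - t ≤ p.length by omega)
    have far {n : ℕ} (hn : t ≤ n) : S + 2 * δ < n := ht₁.trans_le (mod_cast hn)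
    obtain ⟨u₁, hu₁, hvu₁⟩ := exists_near_of_far hconn hδ hhyp hY hY' hy₁ hy₂ hz₁ hz₂
      (show _ ≤ S by linarith) (by linarith) p hp hv₁ (far (by omega)) (far (by omega))
    obtain ⟨u₂, hu₂, hvu₂⟩ := exists_near_of_far hconn hδ hhyp hY hY' hy₁ hy₂ hz₁ hz₂
      (show _ ≤ S by linarith) (by linarith) p hp hv₂ (far (by omega)) (far (by omega))
    have hu := hsep u₁ hu₁ u₂ hu₂
    have e₁ : (G.dist y₁ v₁ : ℝ) = t := mod_cast hv₁l
    have e₂ : (G.dist v₂ y₂ : ℝ) = t := mod_cast (show G.dist v₂ y₂ = t by omega)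
    have t₁ := tri y₁ v₁ y₂
    have t₂ := tri v₁ v₂ y₂
    have t₃ := tri v₁ u₁ v₂
    have t₄ := tri u₁ u₂ v₂
    rw [G.dist_comm (u := u₂) (v := v₂)] at t₄
    linarith
end

section
/- Let X be a δ-hyperbolic graph and let 𝒴 be an M0-geometrically separated family of nonempty K-quasiconvex subsets of X. Set J = 2K+10δ+2, B = M0+6K+18δ+4, and θ1 = 2B + J(2δ+K+1). Then for any pairwise distinct U, V, W ∈ 𝒴: if d_W^π(U,V) > θ1, then d_V^π(U,W) ≤ θ1; in particular min{d_W^π(U,V), d_V^π(U,W)} ≤ θ1. -/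
/-!
The argument rests on one fact about a `K`-quasiconvex set `Y` (`near_geodesic`): if `a`, `b` are
nearest points of `Y` to `u`, `c`, then every vertex of a geodesic `[a,b]` at distance more than
`4δ+K` from both endpoints is within `2δ` of any geodesic `[u,c]`.  Indeed the quadrilateral
`a, b, c, u` is `2δ`-slim, and a vertex of `[u,a]` that is within `2δ+K` of `Y` is within `2δ+K`
of `a`.

Two consequences follow.

* `dist_proj_le`: for distinct members `Y`, `Y'` of the family, `π_Y(Y')` has diameter at most
  `M0+4K+8δ+2`, because the middle part of `[a,b]` runs close to both `Y` and `Y'`.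
* `dist_lt_of_far`: if `d(a,b) > 4K+12δ+2`, then `d(u,a) < d(u,c)`, because `[u,c]` has to
  reach the middle of `[a,b]` and then still has some distance to go.

Suppose both projection diameters exceed `θ1`.  Fix `u ∈ U` with nearest points `a ∈ Z` and
`c ∈ W`.  Up to the diameter bound, `a` is far from `π_Z(c)` and `c` is far from `π_W(a)`, so
`dist_lt_of_far` gives both `d(u,a) < d(u,c)` and `d(u,c) < d(u,a)`.
-/

open scoped ENNReal

/-! ### Geodesic walks and nearest points -/

lemma exists_geodesic {V : Type*} {G : SimpleGraph V} (hconn : G.Connected) (x y : V) :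
    ∃ p : G.Walk x y, p.length = G.dist x y :=
  hconn.exists_walk_length_eq_dist x y

lemma dist_tri {V : Type*} {G : SimpleGraph V} (hconn : G.Connected) (x y z : V) :
    (G.dist x z : ℝ) ≤ G.dist x y + G.dist y z := by
  exact_mod_cast hconn.dist_triangle

lemma dist_symm {V : Type*} (G : SimpleGraph V) (x y : V) :
    (G.dist x y : ℝ) = G.dist y x := by
  rw [SimpleGraph.dist_comm]

lemma dist_add_dist_of_mem {V : Type*} {G : SimpleGraph V} (hconn : G.Connected) {x y v : V}
    (p : G.Walk x y) (hp : p.length = G.dist x y) (hv : v ∈ p.support) :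
    (G.dist x v : ℝ) + G.dist v y = G.dist x y := by
  classical
  have h1 := SimpleGraph.dist_le (p.takeUntil v hv)
  have h2 := SimpleGraph.dist_le (p.dropUntil v hv)
  have h3 : (p.takeUntil v hv).length + (p.dropUntil v hv).length = p.length := by
    rw [← SimpleGraph.Walk.length_append, SimpleGraph.Walk.take_spec]
  have h4 := hconn.dist_triangle (u := x) (v := v) (w := y)
  have h5 : G.dist x v + G.dist v y = G.dist x y := by omega
  exact_mod_cast h5

lemma exists_mem_dist_eq {V : Type*} {G : SimpleGraph V} (hconn : G.Connected) {x y : V}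
    (p : G.Walk x y) (hp : p.length = G.dist x y) (n : ℕ) (hn : n ≤ G.dist x y) :
    ∃ v ∈ p.support, G.dist x v = n := by
  refine ⟨p.getVert n, p.getVert_mem_support n, ?_⟩
  have h1 := SimpleGraph.dist_le (p.take n)
  have h2 := SimpleGraph.dist_le (p.drop n)
  rw [SimpleGraph.Walk.take_length] at h1
  rw [SimpleGraph.Walk.drop_length] at h2
  have h4 := hconn.dist_triangle (u := x) (v := p.getVert n) (w := y)
  omega

lemma projSet_nonempty {V : Type*} (G : SimpleGraph V) {Y : Set V} (hY : Y.Nonempty) (z : V) :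
    ∃ y, y ∈ projSet G Y z := by
  have hwf := wellFounded_lt (α := ℕ)
  refine ⟨Function.argminOn (fun y => G.dist z y) Y hY, ?_, ?_⟩
  · exact Function.argminOn_mem _ _ hY
  · intro y' hy'
    exact Function.argminOn_le (fun y => G.dist z y) Y hy'

/-- Moving along a geodesic `[u,a]` towards a nearest point `a` of `u` in `Y`, the vertex `a`
remains a nearest point. -/
lemma dist_le_of_proj {V : Type*} {G : SimpleGraph V} (hconn : G.Connected) {Y : Set V}
    {u a q y : V} (ha : a ∈ projSet G Y u)
    (hq : (G.dist u q : ℝ) + G.dist q a = G.dist u a) (hy : y ∈ Y) :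
    (G.dist q a : ℝ) ≤ G.dist q y := by
  have h1 : (G.dist u a : ℝ) ≤ G.dist u y := by exact_mod_cast ha.2 y hy
  linarith [dist_tri hconn u q y]

/-! ### Projections to a quasiconvex set -/

lemma near_geodesic {V : Type*} {G : SimpleGraph V} (hconn : G.Connected) {δ K : ℝ} (hδ : 0 ≤ δ)
    (hhyp : SlimTrianglesG G δ) {Y : Set V} (hqc : QuasiconvexIn G K Y) {u c a b v : V}
    (ha : a ∈ projSet G Y u) (hb : b ∈ projSet G Y c)
    (p : G.Walk a b) (hp : p.length = G.dist a b) (hv : v ∈ p.support)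
    (hva : 4 * δ + K < G.dist a v) (hvb : 4 * δ + K < G.dist v b)
    (g : G.Walk u c) (hg : g.length = G.dist u c) :
    ∃ q ∈ g.support, (G.dist v q : ℝ) ≤ 2 * δ := by
  obtain ⟨y, hy, hvy⟩ := hqc ha.1 hb.1 p hp v hv
  obtain ⟨r, hr⟩ := exists_geodesic hconn a c
  obtain ⟨s, hs⟩ := exists_geodesic hconn c b
  obtain ⟨t, ht⟩ := exists_geodesic hconn a u
  obtain ⟨w, hw, hvw⟩ := hhyp p r s hp hr hs v hv
  rcases hw with hw | hw
  · obtain ⟨x, hx, hwx⟩ := hhyp r t g hr ht hg w hw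
    have hvx := dist_tri hconn v w x
    rcases hx with hx | hx
    · -- A vertex of `[a,u]` this close to `v` would force `v` to be close to `a`.
      exfalso
      have h1 := dist_add_dist_of_mem hconn t ht hx
      have h2 : (G.dist x a : ℝ) ≤ G.dist x y :=
        dist_le_of_proj hconn ha (by
          rw [dist_symm G u x, dist_symm G x a, dist_symm G u a]; linarith) hy
      linarith [dist_tri hconn x v y, dist_symm G x v, dist_tri hconn a x v, dist_symm G a x]
    · exact ⟨x, hx, by linarith⟩
  · exfalso
    have h1 := dist_add_dist_of_mem hconn s hs hw
    have h2 := dist_le_of_proj hconn hb h1 hy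
    linarith [dist_tri hconn w v y, dist_symm G w v, dist_tri hconn v w b]

lemma dist_proj_le {V : Type*} {G : SimpleGraph V} (hconn : G.Connected) {δ K M0 : ℝ}
    (hδ : 0 ≤ δ) (hK : 0 ≤ K) (hM0 : 0 ≤ M0) (hhyp : SlimTrianglesG G δ) {Y Y' : Set V}
    (hqc : QuasiconvexIn G K Y) (hqc' : QuasiconvexIn G K Y')
    (hsep : ∀ x ∈ Y ∩ nbhd G (2 * K + 2 * δ) Y', ∀ y ∈ Y ∩ nbhd G (2 * K + 2 * δ) Y',
      (G.dist x y : ℝ) ≤ M0)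
    {u c a b : V} (hu : u ∈ Y') (hc : c ∈ Y') (ha : a ∈ projSet G Y u) (hb : b ∈ projSet G Y c) :
    (G.dist a b : ℝ) ≤ M0 + 4 * K + 8 * δ + 2 := by
  by_contra! hlt
  obtain ⟨p, hp⟩ := exists_geodesic hconn a b
  obtain ⟨g, hg⟩ := exists_geodesic hconn u c
  have key : ∀ v ∈ p.support, 4 * δ + K < G.dist a v → 4 * δ + K < G.dist v b →
      ∃ y ∈ Y ∩ nbhd G (2 * K + 2 * δ) Y', (G.dist v y : ℝ) ≤ K := by
    intro v hv hva hvb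
    obtain ⟨q, hq, hvq⟩ := near_geodesic hconn hδ hhyp hqc ha hb p hp hv hva hvb g hg
    obtain ⟨y, hy, hvy⟩ := hqc ha.1 hb.1 p hp v hv
    obtain ⟨y', hy', hqy'⟩ := hqc' hu hc g hg q hq
    refine ⟨y, ⟨hy, y', hy', ?_⟩, hvy⟩
    linarith [dist_tri hconn y v y', dist_tri hconn v q y', dist_symm G y v]
  -- `n` is the least integer exceeding `4δ+K`.
  set n := ⌊4 * δ + K⌋₊ + 1 with hn
  have hn1 : 4 * δ + K < n := by rw [hn]; push_cast; exact Nat.lt_floor_add_one _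
  have hn2 : (n : ℝ) ≤ 4 * δ + K + 1 := by
    rw [hn]; push_cast
    linarith [Nat.floor_le (show 0 ≤ 4 * δ + K by positivity)]
  have h2n : 2 * n ≤ G.dist a b := by
    have : (2 : ℝ) * n ≤ G.dist a b := by linarith
    exact_mod_cast this
  obtain ⟨v, hv, hav⟩ := exists_mem_dist_eq hconn p hp n (by omega)
  obtain ⟨w, hw, haw⟩ := exists_mem_dist_eq hconn p hp (G.dist a b - n) (by omega)
  have hav' : (G.dist a v : ℝ) = n := by exact_mod_cast hav
  have haw' : (G.dist a w : ℝ) = G.dist a b - n := by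
    rw [haw, Nat.cast_sub (by omega)]
  have hv2 := dist_add_dist_of_mem hconn p hp hv
  have hw2 := dist_add_dist_of_mem hconn p hp hw
  obtain ⟨x, hx, hvx⟩ := key v hv (by linarith) (by linarith)
  obtain ⟨y, hy, hwy⟩ := key w hw (by linarith) (by linarith)
  have hxy := hsep x hx y hy
  linarith [dist_tri hconn a v b, dist_tri hconn v x b, dist_tri hconn x y b,
    dist_tri hconn y w b, dist_symm G y w]

lemma dist_lt_of_far {V : Type*} {G : SimpleGraph V} (hconn : G.Connected) {δ K : ℝ}
    (hδ : 0 ≤ δ) (hK : 0 ≤ K) (hhyp : SlimTrianglesG G δ) {Y : Set V}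
    (hqc : QuasiconvexIn G K Y) {u c a b : V}
    (ha : a ∈ projSet G Y u) (hb : b ∈ projSet G Y c)
    (hab : 4 * K + 12 * δ + 2 < G.dist a b) : G.dist u a < G.dist u c := by
  obtain ⟨p, hp⟩ := exists_geodesic hconn a b
  obtain ⟨g, hg⟩ := exists_geodesic hconn u c
  set n := ⌊4 * δ + K⌋₊ + 1 with hn
  have hn1 : 4 * δ + K < n := by rw [hn]; push_cast; exact Nat.lt_floor_add_one _
  have hn2 : (n : ℝ) ≤ 4 * δ + K + 1 := by
    rw [hn]; push_cast
    linarith [Nat.floor_le (show 0 ≤ 4 * δ + K by positivity)]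
  have hnab : n ≤ G.dist a b := by
    have : (n : ℝ) ≤ G.dist a b := by linarith
    exact_mod_cast this
  obtain ⟨v, hv, hav⟩ := exists_mem_dist_eq hconn p hp n hnab
  have hav' : (G.dist a v : ℝ) = n := by exact_mod_cast hav
  have hv2 := dist_add_dist_of_mem hconn p hp hv
  obtain ⟨q, hq, hvq⟩ := near_geodesic hconn hδ hhyp hqc ha hb p hp hv (by linarith)
    (by linarith) g hg
  have hq2 := dist_add_dist_of_mem hconn g hg hq
  obtain ⟨y, hy, hvy⟩ := hqc ha.1 hb.1 p hp v hv
  have hua : (G.dist u a : ℝ) ≤ G.dist u y := by exact_mod_cast ha.2 y hy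
  have hcb : (G.dist c b : ℝ) ≤ G.dist c y := by exact_mod_cast hb.2 y hy
  -- `v` is far from `c`, since otherwise `b`, the nearest point to `c`, would be close to `v`.
  have hvc : 4 * δ + K < G.dist v c := by
    linarith [dist_tri hconn c v y, dist_symm G c v, dist_tri hconn v c b]
  have : (G.dist u a : ℝ) < G.dist u c := by
    linarith [dist_tri hconn u q y, dist_tri hconn q v y, dist_symm G q v, dist_tri hconn v q c]
  exact_mod_cast this

/-! ### Diameters in extended and in real terms -/

lemma natCast_le_ofReal_iff {n : ℕ} {r : ℝ} (hr : 0 ≤ r) :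
    (n : ℝ≥0∞) ≤ ENNReal.ofReal r ↔ (n : ℝ) ≤ r := by
  rw [← ENNReal.ofReal_natCast, ENNReal.ofReal_le_ofReal_iff hr]

lemma gdiam_le_iff {V : Type*} {G : SimpleGraph V} {S : Set V} {r : ℝ} (hr : 0 ≤ r) :
    gdiam G S ≤ ENNReal.ofReal r ↔ ∀ a ∈ S, ∀ b ∈ S, (G.dist a b : ℝ) ≤ r := by
  simp only [gdiam, iSup_le_iff, natCast_le_ofReal_iff hr]

/-- When both projections have diameter at most `r`, a value of `d_Y^π(A,A')` above `r` is
realised by a pair with one point in each projection. -/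
lemma exists_of_lt_projDiam {V : Type*} {G : SimpleGraph V} {Y A A' : Set V} {r : ℝ} (hr : 0 ≤ r)
    (hA : ∀ x ∈ A, ∀ x' ∈ A, ∀ a ∈ projSet G Y x, ∀ a' ∈ projSet G Y x', (G.dist a a' : ℝ) ≤ r)
    (hA' : ∀ x ∈ A', ∀ x' ∈ A', ∀ a ∈ projSet G Y x, ∀ a' ∈ projSet G Y x',
      (G.dist a a' : ℝ) ≤ r)
    (h : ENNReal.ofReal r < projDiam G Y A A') :
    ∃ x ∈ A, ∃ x' ∈ A', ∃ a ∈ projSet G Y x, ∃ a' ∈ projSet G Y x', r < G.dist a a' := by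
  by_contra! hcon
  refine h.not_ge ((gdiam_le_iff hr).2 ?_)
  simp only [projSetOf, Set.mem_union, Set.mem_iUnion, exists_prop]
  rintro a (⟨x, hx, ha⟩ | ⟨x, hx, ha⟩) b (⟨y, hy, hb⟩ | ⟨y, hy, hb⟩)
  · exact hA x hx y hy a ha b hb
  · exact hcon x hx y hy a ha b hb
  · rw [dist_symm]
    exact hcon y hy x hx b hb a ha
  · exact hA' x hx y hy a ha b hb

/-! ### The Behrstock inequality -/

/-- Behrstock-type inequality for an `M0`-geometrically separated family `𝒴` of nonempty
`K`-quasiconvex subsets of a `δ`-hyperbolic graph.  With `J = 2K+10δ+2`,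
`B = M0+6K+18δ+4` and `θ1 = 2B + J(2δ+K+1)`: for pairwise distinct `U, W, Z ∈ 𝒴`, if
`d_Z^π(U,W) > θ1` then `d_W^π(U,Z) ≤ θ1`; in particular
`min{d_Z^π(U,W), d_W^π(U,Z)} ≤ θ1`. -/
theorem behrstock_inequality
    {V : Type*} (G : SimpleGraph V) (hconn : G.Connected)
    (δ K M0 : ℝ) (hδ : 0 ≤ δ) (hK : 0 ≤ K) (hM0 : 0 ≤ M0)
    (hhyp : SlimTrianglesG G δ)
    (𝒴 : Set (Set V))
    (hne : ∀ Y ∈ 𝒴, Y.Nonempty)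
    (hqc : ∀ Y ∈ 𝒴, QuasiconvexIn G K Y)
    (hsep : ∀ Y ∈ 𝒴, ∀ Y' ∈ 𝒴, Y ≠ Y' →
      gdiam G (Y ∩ nbhd G (2 * K + 2 * δ) Y') ≤ ENNReal.ofReal M0)
    (J B θ1 : ℝ)
    (hJ : J = 2 * K + 10 * δ + 2)
    (hB : B = M0 + 6 * K + 18 * δ + 4)
    (hθ1 : θ1 = 2 * B + J * (2 * δ + K + 1)) :
    ∀ U ∈ 𝒴, ∀ W ∈ 𝒴, ∀ Z ∈ 𝒴, U ≠ W → U ≠ Z → W ≠ Z →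
      (ENNReal.ofReal θ1 < projDiam G Z U W →
        projDiam G W U Z ≤ ENNReal.ofReal θ1) ∧
      min (projDiam G Z U W) (projDiam G W U Z) ≤ ENNReal.ofReal θ1 := by
  intro U hU W hW Z hZ hUW hUZ hWZ
  have hθ : 2 * (M0 + 4 * K + 8 * δ + 2) + (4 * K + 12 * δ + 2) ≤ θ1 := by
    subst hθ1 hJ hB
    nlinarith [mul_nonneg hδ hK, mul_nonneg hδ hδ, mul_nonneg hK hK]
  have hθ0 : 0 ≤ θ1 := by linarith
  have hproj : ∀ Y ∈ 𝒴, ∀ Y' ∈ 𝒴, Y ≠ Y' → ∀ x ∈ Y', ∀ x' ∈ Y', ∀ a ∈ projSet G Y x,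
      ∀ a' ∈ projSet G Y x', (G.dist a a' : ℝ) ≤ M0 + 4 * K + 8 * δ + 2 := by
    intro Y hY Y' hY' hne' x hx x' hx' a ha a' ha'
    exact dist_proj_le hconn hδ hK hM0 hhyp (hqc Y hY) (hqc Y' hY')
      ((gdiam_le_iff hM0).1 (hsep Y hY Y' hY' hne')) hx hx' ha ha'
  have hprojθ : ∀ Y ∈ 𝒴, ∀ Y' ∈ 𝒴, Y ≠ Y' → ∀ x ∈ Y', ∀ x' ∈ Y', ∀ a ∈ projSet G Y x,
      ∀ a' ∈ projSet G Y x', (G.dist a a' : ℝ) ≤ θ1 := by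
    intro Y hY Y' hY' hne' x hx x' hx' a ha a' ha'
    linarith [hproj Y hY Y' hY' hne' x hx x' hx' a ha a' ha']
  have main : ENNReal.ofReal θ1 < projDiam G Z U W →
      projDiam G W U Z ≤ ENNReal.ofReal θ1 := by
    intro h1
    by_contra! h2
    obtain ⟨u, hu, w, hw, a, ha, b, hb, hab⟩ := exists_of_lt_projDiam hθ0
      (hprojθ Z hZ U hU hUZ.symm) (hprojθ Z hZ W hW hWZ.symm) h1
    obtain ⟨u', hu', z, hz, c', hc', e', he', hce'⟩ := exists_of_lt_projDiam hθ0
      (hprojθ W hW U hU hUW.symm) (hprojθ W hW Z hZ hWZ) h2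
    obtain ⟨c, hc⟩ := projSet_nonempty G (hne W hW) u
    obtain ⟨d, hd⟩ := projSet_nonempty G (hne Z hZ) c
    obtain ⟨e, he⟩ := projSet_nonempty G (hne W hW) a
    have hbd := hproj Z hZ W hW hWZ.symm c hc.1 w hw d hd b hb
    have hcc := hproj W hW U hU hUW.symm u' hu' u hu c' hc' c hc
    have hee := hproj W hW Z hZ hWZ a ha.1 z hz e he e' he'
    have l1 := dist_lt_of_far hconn hδ hK hhyp (hqc Z hZ) ha hd
      (by linarith [dist_tri hconn a d b])
    have l2 := dist_lt_of_far hconn hδ hK hhyp (hqc W hW) hc he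
      (by linarith [dist_tri hconn c' c e', dist_tri hconn c e e'])
    exact lt_asymm l1 l2
  refine ⟨main, ?_⟩
  rcases le_or_gt (projDiam G Z U W) (ENNReal.ofReal θ1) with h | h
  · exact (min_le_left _ _).trans h
  · exact (min_le_right _ _).trans (main h)
end

section
/- Let X be a δ-hyperbolic graph and let 𝒴 be an M0-geometrically separated family of nonempty K-quasiconvex subsets of X. There is a constant θ, depending only on δ, K and M0 and bounded above by a linear function of M0 (with coefficients depending only on δ and K), such that for all distinct U, V ∈ 𝒴 the set {Y ∈ 𝒴 − {U,V} : d_Y^π(U,V) ≥ θ} is finite. -/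
/-!
Write `d` for the graph metric and call `v` *between* `x` and `y` when it lies on a geodesic
joining them, i.e. `d x v + d v y = d x y`; this relation is `OnGeod`.

* If `p ∈ π_Y(x)` and `q ∈ π_Y(y)` are far apart compared with `δ` and `K`, there are points
  between `x` and `y` near `p` and near `q` (`near_of_proj_far`).
* Two distinct members of the family that are within `R` of each other at two places have those
  places at distance at most `M0 + O(R + δ + K)` (`dist_le_of_close`): the middle part of the
  geodesic between the two places is `2δ`-close to a geodesic of the other set, which is exactly
  what the separation radius `2K + 2δ` detects.
* Together these give `diam π_Y(U) ≤ M0 + O(δ + K)` for `U ≠ Y` (`proj_diam_le`).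

Fix `u₀ ∈ U` and `w₀ ∈ W`. If `d_Y^π(U,W)` is large, the projections of `u₀` and `w₀` to `Y` are
farther apart than `M0 + O(δ + K)`, so they are near points `a`, `b` between `u₀` and `w₀`. Points
between `u₀` and `w₀` are determined up to `2δ` by their distance to `u₀` (`thin_bigon`), so if two
distinct `Y` had the same pair `(d u₀ a, d u₀ b)`, they would be close at two far apart places,
contradicting separation. Thus `Y ↦ (d u₀ a, d u₀ b)` is injective into a finite set.
-/

open scoped ENNReal

universe u

namespace LargeProj

variable {V : Type*} {G : SimpleGraph V} {δ K M0 : ℝ} {Y Y' U : Set V}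

/-- The graph distance as a real number. -/
noncomputable def gd (G : SimpleGraph V) (x y : V) : ℝ := (G.dist x y : ℝ)

/-- `v` lies on some geodesic from `x` to `y`. -/
def OnGeod (G : SimpleGraph V) (x v y : V) : Prop := gd G x v + gd G v y = gd G x y

lemma gd_nonneg (x y : V) : 0 ≤ gd G x y := Nat.cast_nonneg _

lemma gd_comm (x y : V) : gd G x y = gd G y x := by
  simp only [gd, SimpleGraph.dist_comm]

lemma gd_tri (hG : G.Connected) (x y z : V) : gd G x z ≤ gd G x y + gd G y z := by
  simp only [gd]; exact_mod_cast hG.dist_triangle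

lemma OnGeod.symm {x v y : V} (h : OnGeod G x v y) : OnGeod G y v x := by
  unfold OnGeod at *
  rw [gd_comm y v, gd_comm v x, gd_comm y x]; linarith

lemma btw_of_mem (hG : G.Connected) {x y v : V} (p : G.Walk x y) (hp : p.length = G.dist x y)
    (hv : v ∈ p.support) : OnGeod G x v y := by
  classical
  have h1 := SimpleGraph.dist_le (p.takeUntil v hv)
  have h2 := SimpleGraph.dist_le (p.dropUntil v hv)
  have h3 : (p.takeUntil v hv).length + (p.dropUntil v hv).length = p.length := by
    rw [← SimpleGraph.Walk.length_append, SimpleGraph.Walk.take_spec]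
  have h4 : G.dist x y ≤ G.dist x v + G.dist v y := hG.dist_triangle
  have h5 : G.dist x v + G.dist v y = G.dist x y := by omega
  unfold OnGeod gd
  exact_mod_cast h5

lemma exists_geod_of_btw (hG : G.Connected) {x y v : V} (h : OnGeod G x v y) :
    ∃ p : G.Walk x y, p.length = G.dist x y ∧ v ∈ p.support := by
  obtain ⟨p, hp⟩ := hG.exists_walk_length_eq_dist x v
  obtain ⟨q, hq⟩ := hG.exists_walk_length_eq_dist v y
  refine ⟨p.append q, ?_, ?_⟩
  · rw [SimpleGraph.Walk.length_append, hp, hq]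
    unfold OnGeod gd at h; exact_mod_cast h
  · simp [SimpleGraph.Walk.mem_support_append_iff]

lemma exists_btw (hG : G.Connected) (x y : V) (n : ℕ) (hn : (n : ℝ) ≤ gd G x y) :
    ∃ v, OnGeod G x v y ∧ gd G x v = n := by
  obtain ⟨p, hp⟩ := hG.exists_walk_length_eq_dist x y
  have hn' : n ≤ p.length := by rw [hp]; unfold gd at hn; exact_mod_cast hn
  have hb := btw_of_mem hG p hp (p.getVert_mem_support n)
  refine ⟨p.getVert n, hb, ?_⟩
  have h1 := SimpleGraph.dist_le (p.take n)
  have h2 := SimpleGraph.dist_le (p.drop n)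
  rw [SimpleGraph.Walk.take_length] at h1
  rw [SimpleGraph.Walk.drop_length] at h2
  have h3 : G.dist x (p.getVert n) + G.dist (p.getVert n) y = G.dist x y := by
    unfold OnGeod gd at hb; exact_mod_cast hb
  have : G.dist x (p.getVert n) = n := by omega
  simp [gd, this]

lemma slim_btw (hG : G.Connected) (hS : SlimTrianglesG G δ) {x y v : V} (z : V)
    (h : OnGeod G x v y) : ∃ w, gd G v w ≤ δ ∧ (OnGeod G x w z ∨ OnGeod G z w y) := by
  obtain ⟨p, hp, hv⟩ := exists_geod_of_btw hG h
  obtain ⟨q, hq⟩ := hG.exists_walk_length_eq_dist x z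
  obtain ⟨r, hr⟩ := hG.exists_walk_length_eq_dist z y
  obtain ⟨w, hw, hd⟩ := hS p q r hp hq hr v hv
  exact ⟨w, hd, hw.imp (btw_of_mem hG q hq) (btw_of_mem hG r hr)⟩

lemma qc_btw (hG : G.Connected) (hY : QuasiconvexIn G K Y) {x y v : V} (hx : x ∈ Y) (hy : y ∈ Y)
    (h : OnGeod G x v y) : ∃ u ∈ Y, gd G v u ≤ K := by
  obtain ⟨p, hp, hv⟩ := exists_geod_of_btw hG h
  exact hY hx hy p hp v hv

lemma thin_bigon (hG : G.Connected) (hS : SlimTrianglesG G δ) {x y v v' : V}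
    (h : OnGeod G x v y) (h' : OnGeod G x v' y) (he : gd G x v = gd G x v') : gd G v v' ≤ 2 * δ := by
  obtain ⟨w, hw, hb | hb⟩ := slim_btw hG hS v' h
  · have h1 := gd_tri hG x w v
    have h2 := gd_tri hG v w v'
    rw [gd_comm w v] at h1
    unfold OnGeod at *; linarith
  · have h1 := gd_tri hG v w y
    have h2 := gd_tri hG v w v'
    rw [gd_comm w v'] at h2
    unfold OnGeod at *; linarith

lemma exists_proj (hY : Y.Nonempty) (z : V) : ∃ p, p ∈ projSet G Y z := by
  obtain ⟨p, hp, h⟩ := WellFounded.has_min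
    (InvImage.wf (fun y => G.dist z y) Nat.lt_wfRel.wf) Y hY
  exact ⟨p, hp, fun y' hy' => not_lt.1 (h y' hy')⟩

lemma proj_le {z p y : V} (hp : p ∈ projSet G Y z) (hy : y ∈ Y) : gd G z p ≤ gd G z y :=
  Nat.cast_le.2 (hp.2 y hy)

/-- Some geodesic from `z` to a point `y` of the quasiconvex set `Y` passes near the projection `p`
of `z`: the point of `[p,y]` at distance slightly more than `2δ + K` from `p` cannot be
`δ`-close to `[z,p]`, since this would produce a point of `Y` closer to `z` than `p`. -/
lemma near_of_proj (hG : G.Connected) (hS : SlimTrianglesG G δ) (hδ : 0 ≤ δ) (hK : 0 ≤ K)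
    (hY : QuasiconvexIn G K Y) {z p y : V} (hp : p ∈ projSet G Y z) (hy : y ∈ Y) :
    ∃ a, OnGeod G z a y ∧ gd G p a ≤ 3 * δ + K + 2 := by
  set n : ℕ := ⌊2 * δ + K⌋₊ + 1 with hn
  have hn1 : 2 * δ + K < n := by push_cast [hn]; exact Nat.lt_floor_add_one _
  have hn2 : (n : ℝ) ≤ 2 * δ + K + 1 := by
    push_cast [hn]; linarith [Nat.floor_le (show 0 ≤ 2 * δ + K by positivity)]
  by_cases hle : (n : ℝ) ≤ gd G p y
  · obtain ⟨v, hv, hvn⟩ := exists_btw hG p y n hle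
    obtain ⟨w, hw, hb | hb⟩ := slim_btw hG hS z hv
    · exfalso
      obtain ⟨y', hy', hvy'⟩ := qc_btw hG hY hp.1 hy hv
      have h1 := proj_le hp hy'
      have h2 := gd_tri hG z w y'
      have h3 := gd_tri hG w v y'
      have h4 := gd_tri hG p w v
      rw [gd_comm w v] at h3 h4
      have h5 := hb.symm
      have h6 := gd_comm (G := G) w p
      unfold OnGeod at h5
      linarith
    · exact ⟨w, hb, by linarith [gd_tri hG p v w]⟩
  · refine ⟨y, ?_, by linarith⟩
    simp [OnGeod, gd]

/-- If the projections of `x` and `y` to a quasiconvex set are far apart, some geodesic from `x` to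
`y` passes near the projection of `x`. -/
lemma near_of_proj_far (hG : G.Connected) (hS : SlimTrianglesG G δ) (hδ : 0 ≤ δ) (hK : 0 ≤ K)
    (hY : QuasiconvexIn G K Y) {x y p q : V} (hp : p ∈ projSet G Y x) (hq : q ∈ projSet G Y y)
    (hfar : 2 * (4 * δ + K + 2) < gd G p q) :
    ∃ a, OnGeod G x a y ∧ gd G p a ≤ 4 * δ + K + 2 := by
  obtain ⟨a', ha', hpa⟩ := near_of_proj hG hS hδ hK hY hp hq.1
  obtain ⟨w, hw, hb | hb⟩ := slim_btw hG hS y ha'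
  · exact ⟨w, hb, by linarith [gd_tri hG p a' w]⟩
  · exfalso
    -- `w ∈ [y,q]` is near `p`; as `q` is a nearest point to `y`, `w` is also near `q`.
    have h1 := gd_tri hG p a' w
    have h2 := proj_le hq hp.1
    have h3 := gd_tri hG y w p
    have h4 := gd_tri hG p w q
    rw [gd_comm w p] at h3
    unfold OnGeod at hb
    linarith

lemma gd_le_of_gdiam {S : Set V} (hM : 0 ≤ M0) (h : gdiam G S ≤ ENNReal.ofReal M0) {a b : V}
    (ha : a ∈ S) (hb : b ∈ S) : gd G a b ≤ M0 := by
  have h1 : (G.dist a b : ℝ≥0∞) ≤ gdiam G S := by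
    unfold gdiam
    exact (le_iSup₂ (f := fun b _ => (G.dist a b : ℝ≥0∞)) b hb).trans
      (le_iSup₂ (f := fun a _ => ⨆ b ∈ S, (G.dist a b : ℝ≥0∞)) a ha)
  have h2 := h1.trans h
  rw [← ENNReal.ofReal_natCast] at h2
  exact (ENNReal.ofReal_le_ofReal_iff hM).1 h2

/-- If `y₁, y₂ ∈ Y` are within `R` of `z₁, z₂ ∈ Y'`, then a point of a geodesic `[y₁,y₂]` far from
both ends is near a point of `Y` that lies in the `(2K+2δ)`-neighborhood of `Y'`. -/
lemma middle_close (hG : G.Connected) (hS : SlimTrianglesG G δ) (hδ : 0 ≤ δ)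
    (hY : QuasiconvexIn G K Y) (hY' : QuasiconvexIn G K Y') {R : ℝ} {y₁ y₂ z₁ z₂ v : V}
    (hy₁ : y₁ ∈ Y) (hy₂ : y₂ ∈ Y) (hz₁ : z₁ ∈ Y') (hz₂ : z₂ ∈ Y')
    (h₁ : gd G y₁ z₁ ≤ R) (h₂ : gd G y₂ z₂ ≤ R) (hv : OnGeod G y₁ v y₂)
    (hv₁ : R + 2 * δ < gd G y₁ v) (hv₂ : R + 2 * δ < gd G v y₂) :
    ∃ u ∈ Y ∩ nbhd G (2 * K + 2 * δ) Y', gd G v u ≤ K := by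
  obtain ⟨u, hu, hvu⟩ := qc_btw hG hY hy₁ hy₂ hv
  refine ⟨u, ⟨hu, ?_⟩, hvu⟩
  obtain ⟨w, hw, hb | hb⟩ := slim_btw hG hS z₂ hv
  · obtain ⟨w', hw', hb' | hb'⟩ := slim_btw hG hS z₁ hb
    · exfalso
      have e1 := gd_tri hG v w w'
      have e2 := gd_tri hG y₁ w' v
      have e3 := gd_nonneg (G := G) w' z₁
      rw [gd_comm w' v] at e2
      unfold OnGeod at hb'; linarith
    · obtain ⟨u', hu', hwu'⟩ := qc_btw hG hY' hz₁ hz₂ hb'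
      refine ⟨u', hu', ?_⟩
      have e1 := gd_tri hG v w w'
      have e2 := gd_tri hG u v w'
      have e3 := gd_tri hG u w' u'
      rw [gd_comm u v] at e2
      change gd G u u' ≤ _
      linarith
  · exfalso
    have e1 := gd_tri hG v w y₂
    have e2 := gd_nonneg (G := G) z₂ w
    rw [gd_comm y₂ z₂] at h₂
    unfold OnGeod at hb; linarith

lemma dist_le_of_close (hG : G.Connected) (hS : SlimTrianglesG G δ) (hδ : 0 ≤ δ) (hK : 0 ≤ K)
    (hM : 0 ≤ M0) (hY : QuasiconvexIn G K Y) (hY' : QuasiconvexIn G K Y')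
    (hsep : gdiam G (Y ∩ nbhd G (2 * K + 2 * δ) Y') ≤ ENNReal.ofReal M0)
    {R : ℝ} {y₁ y₂ z₁ z₂ : V}
    (hy₁ : y₁ ∈ Y) (hy₂ : y₂ ∈ Y) (hz₁ : z₁ ∈ Y') (hz₂ : z₂ ∈ Y')
    (h₁ : gd G y₁ z₁ ≤ R) (h₂ : gd G y₂ z₂ ≤ R) :
    gd G y₁ y₂ ≤ M0 + (2 * K + 2 * (R + 2 * δ + 1)) := by
  have hR : 0 ≤ R := (gd_nonneg _ _).trans h₁
  by_contra! hcon
  set m : ℕ := ⌊R + 2 * δ⌋₊ + 1 with hm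
  have hm1 : R + 2 * δ < m := by push_cast [hm]; exact Nat.lt_floor_add_one _
  have hm2 : (m : ℝ) ≤ R + 2 * δ + 1 := by
    push_cast [hm]; linarith [Nat.floor_le (show 0 ≤ R + 2 * δ by positivity)]
  obtain ⟨v₁, hv₁, hd₁⟩ := exists_btw hG y₁ y₂ m (by linarith)
  obtain ⟨v₂, hv₂, hd₂⟩ := exists_btw hG y₂ y₁ m (by rw [gd_comm]; linarith)
  replace hv₂ := hv₂.symm
  rw [gd_comm] at hd₂
  have hb₁ := hv₁
  have hb₂ := hv₂
  unfold OnGeod at hb₁ hb₂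
  obtain ⟨u₁, hu₁, hvu₁⟩ := middle_close hG hS hδ hY hY' hy₁ hy₂ hz₁ hz₂ h₁ h₂ hv₁
    (by linarith) (by linarith)
  obtain ⟨u₂, hu₂, hvu₂⟩ := middle_close hG hS hδ hY hY' hy₁ hy₂ hz₁ hz₂ h₁ h₂ hv₂
    (by linarith) (by linarith)
  have e := gd_le_of_gdiam hM hsep hu₁ hu₂
  have e1 := gd_tri hG y₁ v₁ y₂
  have e2 := gd_tri hG v₁ u₁ y₂
  have e3 := gd_tri hG u₁ u₂ y₂
  have e4 := gd_tri hG u₂ v₂ y₂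
  rw [gd_comm u₂ v₂] at e4
  linarith

lemma proj_diam_le (hG : G.Connected) (hS : SlimTrianglesG G δ) (hδ : 0 ≤ δ) (hK : 0 ≤ K)
    (hM : 0 ≤ M0) (hY : QuasiconvexIn G K Y) (hU : QuasiconvexIn G K U)
    (hsep : gdiam G (Y ∩ nbhd G (2 * K + 2 * δ) U) ≤ ENNReal.ofReal M0)
    {p q : V} (hp : p ∈ projSetOf G Y U) (hq : q ∈ projSetOf G Y U) :
    gd G p q ≤ M0 + (12 * δ + 6 * K + 6) := by
  simp only [projSetOf, Set.mem_iUnion] at hp hq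
  obtain ⟨x, hx, hp⟩ := hp
  obtain ⟨y, hy, hq⟩ := hq
  by_cases hfar : 2 * (4 * δ + K + 2) < gd G p q
  · obtain ⟨a, ha, hpa⟩ := near_of_proj_far hG hS hδ hK hY hp hq hfar
    obtain ⟨b, hb, hqb⟩ := near_of_proj_far hG hS hδ hK hY hq hp (by rwa [gd_comm])
    obtain ⟨a', ha', haa⟩ := qc_btw hG hU hx hy ha
    obtain ⟨b', hb', hbb⟩ := qc_btw hG hU hy hx hb
    have := dist_le_of_close hG hS hδ hK hM hY hU hsep hp.1 hq.1 ha' hb'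
      (R := 4 * δ + 2 * K + 2) (by linarith [gd_tri hG p a a']) (by linarith [gd_tri hG q b b'])
    linarith
  · linarith

/-- Any diameter that is at least `θ ≥ 1` is witnessed, up to `1`, by a pair of points. -/
lemma exists_far {S : Set V} {θ : ℝ} (hθ : 1 ≤ θ) (h : ENNReal.ofReal θ ≤ gdiam G S) :
    ∃ a ∈ S, ∃ b ∈ S, θ - 1 < gd G a b := by
  have h1 : ENNReal.ofReal (θ - 1) < gdiam G S :=
    lt_of_lt_of_le ((ENNReal.ofReal_lt_ofReal_iff (by linarith)).2 (by linarith)) h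
  simp only [gdiam, lt_iSup_iff] at h1
  obtain ⟨a, ha, b, hb, h2⟩ := h1
  refine ⟨a, ha, b, hb, ?_⟩
  rw [← ENNReal.ofReal_natCast] at h2
  exact (ENNReal.ofReal_lt_ofReal_iff_of_nonneg (by linarith)).1 h2

end LargeProj

open LargeProj in
/-- For an `M0`-geometrically separated family `𝒴` of nonempty `K`-quasiconvex subsets of
a `δ`-hyperbolic graph, there is a constant `θ`, depending only on `δ`, `K`, `M0` and
bounded above by a linear function of `M0` with coefficients depending only on `δ` and
`K`, such that for all distinct `U, W ∈ 𝒴` only finitely many `Y ∈ 𝒴 − {U,W}` satisfy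
`d_Y^π(U,W) ≥ θ`. -/
theorem finitely_many_large_projections (δ K : ℝ) (hδ : 0 ≤ δ) (hK : 0 ≤ K) :
    ∃ c₁ c₂ : ℝ, 0 ≤ c₁ ∧ 0 ≤ c₂ ∧ ∀ M0 : ℝ, 0 ≤ M0 →
      ∃ θ : ℝ, θ ≤ c₁ * M0 + c₂ ∧
        ∀ (V : Type u) (G : SimpleGraph V), G.Connected → SlimTrianglesG G δ →
          ∀ 𝒴 : Set (Set V),
            (∀ Y ∈ 𝒴, Y.Nonempty) → (∀ Y ∈ 𝒴, QuasiconvexIn G K Y) →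
            (∀ Y ∈ 𝒴, ∀ Y' ∈ 𝒴, Y ≠ Y' →
              gdiam G (Y ∩ nbhd G (2 * K + 2 * δ) Y') ≤ ENNReal.ofReal M0) →
            ∀ U ∈ 𝒴, ∀ W ∈ 𝒴, U ≠ W →
              {Y | Y ∈ 𝒴 ∧ Y ≠ U ∧ Y ≠ W ∧
                ENNReal.ofReal θ ≤ projDiam G Y U W}.Finite := by
  -- The threshold exceeds twice the bound of `proj_diam_le`, plus the separation needed for injectivity
  -- (`dist_le_of_close` with `R = 10δ + 2K + 4`), plus `1` because the diameter is a supremum.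
  refine ⟨3, 52 * δ + 18 * K + 26, by norm_num, by positivity, fun M0 hM => ?_⟩
  refine ⟨3 * M0 + (52 * δ + 18 * K + 26), le_rfl, ?_⟩
  intro V G hG hS 𝒴 hne hqc hsep U hU W hW _
  obtain ⟨u₀, hu₀⟩ := hne U hU
  obtain ⟨w₀, hw₀⟩ := hne W hW
  -- The projections of the base points to a `Y` in the set are far apart, hence near `[u₀,w₀]`.
  have key : ∀ Y : Set V, ∃ c : V × V × V × V, (Y ∈ 𝒴 ∧ Y ≠ U ∧ Y ≠ W ∧
      ENNReal.ofReal (3 * M0 + (52 * δ + 18 * K + 26)) ≤ projDiam G Y U W) →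
      c.1 ∈ Y ∧ c.2.1 ∈ Y ∧ OnGeod G u₀ c.2.2.1 w₀ ∧ OnGeod G u₀ c.2.2.2 w₀ ∧
      gd G c.1 c.2.2.1 ≤ 4 * δ + K + 2 ∧ gd G c.2.1 c.2.2.2 ≤ 4 * δ + K + 2 ∧
      M0 + (28 * δ + 6 * K + 12) < gd G c.1 c.2.1 := by
    intro Y
    by_cases hY : Y ∈ 𝒴 ∧ Y ≠ U ∧ Y ≠ W ∧
      ENNReal.ofReal (3 * M0 + (52 * δ + 18 * K + 26)) ≤ projDiam G Y U W
    swap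
    · exact ⟨(u₀, u₀, u₀, u₀), fun h => absurd h hY⟩
    obtain ⟨hY, hYU, hYW, hlarge⟩ := hY
    obtain ⟨p₀, hp₀⟩ := exists_proj (G := G) (hne Y hY) u₀
    obtain ⟨q₀, hq₀⟩ := exists_proj (G := G) (hne Y hY) w₀
    have hpU : p₀ ∈ projSetOf G Y U := Set.mem_biUnion hu₀ hp₀
    have hqW : q₀ ∈ projSetOf G Y W := Set.mem_biUnion hw₀ hq₀
    have dU := fun {p q : V} => proj_diam_le (p := p) (q := q) hG hS hδ hK hM (hqc Y hY)
      (hqc U hU) (hsep Y hY U hU hYU)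
    have dW := fun {p q : V} => proj_diam_le (p := p) (q := q) hG hS hδ hK hM (hqc Y hY)
      (hqc W hW) (hsep Y hY W hW hYW)
    have hfar : M0 + (28 * δ + 6 * K + 12) < gd G p₀ q₀ := by
      obtain ⟨p, hp, q, hq, hpq⟩ := exists_far (by linarith) hlarge
      rcases hp with hp | hp <;> rcases hq with hq | hq
      · linarith [dU hp hq]
      · linarith [dU hp hpU, dW hqW hq, gd_tri hG p p₀ q, gd_tri hG p₀ q₀ q]
      · linarith [dU hpU hq, dW hp hqW, gd_tri hG p q₀ q, gd_tri hG q₀ p₀ q,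
          gd_comm (G := G) p₀ q₀]
      · linarith [dW hp hq]
    obtain ⟨a, ha, hpa⟩ := near_of_proj_far hG hS hδ hK (hqc Y hY) hp₀ hq₀ (by linarith)
    obtain ⟨b, hb, hqb⟩ := near_of_proj_far hG hS hδ hK (hqc Y hY) hq₀ hp₀
      (by rw [gd_comm]; linarith)
    exact ⟨(p₀, q₀, a, b), fun _ => ⟨hp₀.1, hq₀.1, ha, hb.symm, hpa, hqb, hfar⟩⟩
  choose c hc using key
  have hbd : ∀ a, OnGeod G u₀ a w₀ → G.dist u₀ a ≤ G.dist u₀ w₀ := by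
    intro a ha
    have h1 := gd_nonneg (G := G) a w₀
    have h2 : gd G u₀ a ≤ gd G u₀ w₀ := by unfold OnGeod at ha; linarith
    exact Nat.cast_le.1 h2
  refine Set.Finite.of_injOn (t := Set.Iic (G.dist u₀ w₀) ×ˢ Set.Iic (G.dist u₀ w₀))
    (f := fun Y => (G.dist u₀ (c Y).2.2.1, G.dist u₀ (c Y).2.2.2)) ?_ ?_
    ((Set.finite_Iic _).prod (Set.finite_Iic _))
  · intro Y hY
    obtain ⟨-, -, ha, hb, -⟩ := hc Y hY
    exact ⟨hbd _ ha, hbd _ hb⟩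
  · -- Two sets with the same image come within `2(4δ + K + 2) + 2δ` of each other at both places.
    intro Y hY Z hZ hYZ
    by_contra hne'
    obtain ⟨hp, hq, ha, hb, hpa, hqb, hfar⟩ := hc Y hY
    obtain ⟨hp', hq', ha', hb', hpa', hqb', -⟩ := hc Z hZ
    simp only [Prod.mk.injEq] at hYZ
    have haa := thin_bigon hG hS ha ha' (by simp only [gd, hYZ.1])
    have hbb := thin_bigon hG hS hb hb' (by simp only [gd, hYZ.2])
    rw [gd_comm] at hpa' hqb'
    have := dist_le_of_close hG hS hδ hK hM (hqc Y hY.1) (hqc Z hZ.1)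
      (hsep Y hY.1 Z hZ.1 hne') hp hq hp' hq' (R := 10 * δ + 2 * K + 4)
      (by linarith [gd_tri hG (c Y).1 (c Y).2.2.1 (c Z).1,
        gd_tri hG (c Y).2.2.1 (c Z).2.2.1 (c Z).1])
      (by linarith [gd_tri hG (c Y).2.1 (c Y).2.2.2 (c Z).2.1,
        gd_tri hG (c Y).2.2.2 (c Z).2.2.2 (c Z).2.1])
    linarith
end
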